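/- If α₁, α₂, α₃ are not vertices of an equilateral triangle, then P(z₁, u*, v*) = 0 for every z₁ ∈ ℂ. Equivalently, for every z₁ ∈ ℂ with 3z₁u* + a(z₁+u*) + b ≠ 0 one has F(z₁, u*) = v*, and for every z₁ ∈ ℂ with 3z₁v* + a(z₁+v*) + b ≠ 0 one has F(z₁, v*) = u*. -/

import Mathlib

/-!
The points `u` and `v` are the roots of the Hessian
`(a² - 3b) z² + (ab - 9c) z + (b² - 3ac)` of the cubic with roots `α₁`, `α₂`, `α₃`: with
`wᵢ = αᵢ z + αⱼ αₖ`, the Hessian is the norm form `∑ wᵢ² - ∑ wᵢ wⱼ`, and this splits over the cube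
roots of `-1` into two conjugate factors that are affine in `z` and vanish at `u` and `v`
respectively. On the other hand the Hessian pair is apolar to the cubic: the two coefficients of
the affine function `z ↦ P(z, u, v)` vanish by Vieta's formulas.
-/

section Polarization

variable {K : Type*} [Field K]

/-- The polarization of the cubic `z³ + a z² + b z + c`: the symmetric function, affine in each
variable, whose restriction to the diagonal is the cubic. In characteristic `3` the divisions give
the junk value `0`. -/
def polarization (a b c z₁ z₂ z₃ : K) : K :=
  z₁ * z₂ * z₃ + a / 3 * (z₁ * z₂ + z₂ * z₃ + z₃ * z₁) + b / 3 * (z₁ + z₂ + z₃) + c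

/-- The solution `z₃` of `polarization a b c z₁ z₂ z₃ = 0`, written `F(z₁, z₂)` in the paper; it
takes the junk value `0` where the denominator vanishes. -/
def polarSolution (a b c z₁ z₂ : K) : K :=
  -((a * z₁ * z₂ + b * (z₁ + z₂) + 3 * c) / (3 * z₁ * z₂ + a * (z₁ + z₂) + b))

/-- The Hessian covariant of the cubic `z³ + a z² + b z + c`, up to a constant factor, as a
quadratic function of `z`. -/
def hessian {R : Type*} [CommRing R] (a b c z : R) : R :=
  (a ^ 2 - 3 * b) * z ^ 2 + (a * b - 9 * c) * z + (b ^ 2 - 3 * a * c)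

variable {a b c z₁ z₂ z₃ u v : K}

theorem polarization_right_comm : polarization a b c z₁ z₃ z₂ = polarization a b c z₁ z₂ z₃ := by
  simp only [polarization]
  ring

variable [NeZero (3 : K)]

theorem three_mul_polarization :
    3 * polarization a b c z₁ z₂ z₃ =
      z₁ * (3 * (z₂ * z₃) + a * (z₂ + z₃) + b) + (a * (z₂ * z₃) + b * (z₂ + z₃) + 3 * c) := by
  have h3 : (3 : K) ≠ 0 := NeZero.ne 3
  simp only [polarization]
  field_simp
  ring

theorem polarSolution_eq_iff (hden : 3 * z₁ * z₂ + a * (z₁ + z₂) + b ≠ 0) :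
    polarSolution a b c z₁ z₂ = z₃ ↔ polarization a b c z₁ z₂ z₃ = 0 := by
  have hP : 3 * polarization a b c z₁ z₂ z₃ =
      z₃ * (3 * z₁ * z₂ + a * (z₁ + z₂) + b) + (a * z₁ * z₂ + b * (z₁ + z₂) + 3 * c) := by
    rw [three_mul_polarization]
    ring
  rw [← mul_eq_zero_iff_left (NeZero.ne (3 : K)), hP, polarSolution, ← neg_div, div_eq_iff hden,
    neg_eq_iff_add_eq_zero, add_comm]

theorem polarization_eq_zero_of_hessian_eq (hlead : a ^ 2 - 3 * b ≠ 0)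
    (hH : ∀ z, hessian a b c z = (a ^ 2 - 3 * b) * ((z - u) * (z - v))) (z : K) :
    polarization a b c z u v = 0 := by
  simp only [hessian] at hH
  have hprod : (a ^ 2 - 3 * b) * (u * v) = b ^ 2 - 3 * a * c := by
    linear_combination -hH 0
  have hsum : (a ^ 2 - 3 * b) * (u + v) = -(a * b - 9 * c) := by
    linear_combination hH 1 - hH 0
  have hslope : 3 * (u * v) + a * (u + v) + b = 0 :=
    (mul_eq_zero_iff_left hlead).mp (by linear_combination 3 * hprod + a * hsum)
  have hconst : a * (u * v) + b * (u + v) + 3 * c = 0 :=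
    (mul_eq_zero_iff_left hlead).mp (by linear_combination a * hprod + b * hsum)
  rw [← mul_eq_zero_iff_left (NeZero.ne (3 : K)), three_mul_polarization, hslope, hconst,
    mul_zero, add_zero]

end Polarization

section LagrangeResolvent

/-- The Lagrange resolvent of `x₁, x₂, x₃` with weights `e₁, e₂, e₃`; the weights that matter here
are the cube roots of `-1`. -/
def lagrangeResolvent {R : Type*} [CommRing R] (e₁ e₂ e₃ x₁ x₂ x₃ : R) : R :=
  x₁ * e₁ + x₂ * e₂ + x₃ * e₃

/-- The zero of the affine function `z ↦ lagrangeResolvent e₁ e₂ e₃ w₁ w₂ w₃`, where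
`wᵢ = αᵢ z + αⱼ αₖ`, with junk value `0` when its slope vanishes. For the cube roots
`e₁, e₂, e₃` of `-1` this is the paper's `u*`, and swapping `e₁` and `e₂` gives `v*`. -/
def resolventZero {K : Type*} [Field K] (e₁ e₂ e₃ α₁ α₂ α₃ : K) : K :=
  -((α₁ * α₂ * e₃ + α₁ * α₃ * e₂ + α₂ * α₃ * e₁) / lagrangeResolvent e₁ e₂ e₃ α₁ α₂ α₃)

theorem lagrangeResolvent_eq_mul_sub_resolventZero {K : Type*} [Field K] {e₁ e₂ e₃ α₁ α₂ α₃ : K}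
    (hne : lagrangeResolvent e₁ e₂ e₃ α₁ α₂ α₃ ≠ 0) (z : K) :
    lagrangeResolvent e₁ e₂ e₃ (α₁ * z + α₂ * α₃) (α₂ * z + α₁ * α₃) (α₃ * z + α₁ * α₂) =
      lagrangeResolvent e₁ e₂ e₃ α₁ α₂ α₃ * (z - resolventZero e₁ e₂ e₃ α₁ α₂ α₃) := by
  rw [resolventZero, sub_neg_eq_add, mul_add, mul_div_cancel₀ _ hne]
  simp only [lagrangeResolvent]
  ring

variable {R : Type*} [CommRing R] {e₁ e₂ α₁ α₂ α₃ a b c : R}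

theorem lagrangeResolvent_mul_swap (hsum : e₁ + e₂ = 1) (hprod : e₁ * e₂ = 1) (x₁ x₂ x₃ : R) :
    lagrangeResolvent e₁ e₂ (-1) x₁ x₂ x₃ * lagrangeResolvent e₂ e₁ (-1) x₁ x₂ x₃ =
      x₁ ^ 2 + x₂ ^ 2 + x₃ ^ 2 - (x₁ * x₂ + x₁ * x₃ + x₂ * x₃) := by
  have hsq : e₁ ^ 2 + e₂ ^ 2 = -1 := by
    linear_combination (e₁ + e₂ + 1) * hsum - 2 * hprod
  simp only [lagrangeResolvent]
  linear_combination (x₁ ^ 2 + x₂ ^ 2) * hprod + x₁ * x₂ * hsq - (x₁ + x₂) * x₃ * hsum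

theorem lagrangeResolvent_mul_swap_eq_hessian_leadingCoeff (hsum : e₁ + e₂ = 1)
    (hprod : e₁ * e₂ = 1) (ha : a = -(α₁ + α₂ + α₃)) (hb : b = α₁ * α₂ + α₁ * α₃ + α₂ * α₃) :
    lagrangeResolvent e₁ e₂ (-1) α₁ α₂ α₃ * lagrangeResolvent e₂ e₁ (-1) α₁ α₂ α₃ =
      a ^ 2 - 3 * b := by
  rw [lagrangeResolvent_mul_swap hsum hprod, ha, hb]
  ring

theorem hessian_eq_lagrangeResolvent_mul_swap (hsum : e₁ + e₂ = 1) (hprod : e₁ * e₂ = 1)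
    (ha : a = -(α₁ + α₂ + α₃)) (hb : b = α₁ * α₂ + α₁ * α₃ + α₂ * α₃) (hc : c = -(α₁ * α₂ * α₃))
    (z : R) :
    hessian a b c z =
      lagrangeResolvent e₁ e₂ (-1) (α₁ * z + α₂ * α₃) (α₂ * z + α₁ * α₃) (α₃ * z + α₁ * α₂) *
        lagrangeResolvent e₂ e₁ (-1)
          (α₁ * z + α₂ * α₃) (α₂ * z + α₁ * α₃) (α₃ * z + α₁ * α₂) := by
  rw [lagrangeResolvent_mul_swap hsum hprod, hessian, ha, hb, hc]
  ring

end LagrangeResolvent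

theorem exp_neg_pi_div_three_mul_I_add_exp :
    Complex.exp (-(Real.pi : ℂ) / 3 * Complex.I) + Complex.exp ((Real.pi : ℂ) / 3 * Complex.I) =
      1 := by
  have hcos : Complex.cos ((Real.pi : ℂ) / 3) = 1 / 2 := by
    simpa only [Complex.ofReal_cos, Complex.ofReal_div, Complex.ofReal_ofNat, Complex.ofReal_one]
      using congrArg Complex.ofReal Real.cos_pi_div_three
  rw [neg_div, add_comm, ← Complex.two_cos, hcos]
  norm_num

theorem exp_neg_pi_div_three_mul_I_mul_exp :
    Complex.exp (-(Real.pi : ℂ) / 3 * Complex.I) * Complex.exp ((Real.pi : ℂ) / 3 * Complex.I) =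
      1 := by
  rw [← Complex.exp_add, neg_div, neg_mul, neg_add_cancel, Complex.exp_zero]

theorem stmt_5_general {K : Type*} [Field K] [NeZero (3 : K)] {e₁ e₂ α₁ α₂ α₃ a b c u v : K}
    (hsum : e₁ + e₂ = 1) (hprod : e₁ * e₂ = 1)
    (ha : a = -(α₁ + α₂ + α₃)) (hb : b = α₁ * α₂ + α₁ * α₃ + α₂ * α₃) (hc : c = -(α₁ * α₂ * α₃))
    (hu : u = resolventZero e₁ e₂ (-1) α₁ α₂ α₃) (hv : v = resolventZero e₂ e₁ (-1) α₁ α₂ α₃)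
    (hne₁ : lagrangeResolvent e₁ e₂ (-1) α₁ α₂ α₃ ≠ 0)
    (hne₂ : lagrangeResolvent e₂ e₁ (-1) α₁ α₂ α₃ ≠ 0) :
    (∀ z, polarization a b c z u v = 0) ∧
    (∀ z, 3 * z * u + a * (z + u) + b ≠ 0 → polarSolution a b c z u = v) ∧
    (∀ z, 3 * z * v + a * (z + v) + b ≠ 0 → polarSolution a b c z v = u) := by
  have hlead := lagrangeResolvent_mul_swap_eq_hessian_leadingCoeff hsum hprod ha hb
  have hH (z : K) : hessian a b c z = (a ^ 2 - 3 * b) * ((z - u) * (z - v)) := by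
    rw [hessian_eq_lagrangeResolvent_mul_swap hsum hprod ha hb hc,
      lagrangeResolvent_eq_mul_sub_resolventZero hne₁,
      lagrangeResolvent_eq_mul_sub_resolventZero hne₂, ← hu, ← hv, mul_mul_mul_comm, hlead]
  have hP := polarization_eq_zero_of_hessian_eq (hlead ▸ mul_ne_zero hne₁ hne₂) hH
  exact ⟨hP, fun z hz => (polarSolution_eq_iff hz).mpr (hP z),
    fun z hz => (polarSolution_eq_iff hz).mpr (polarization_right_comm.trans (hP z))⟩

theorem stmt_5 (α₁ α₂ α₃ e₁ e₂ e₃ a b c u v : ℂ)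
    (P : ℂ → ℂ → ℂ → ℂ) (F : ℂ → ℂ → ℂ)
    (he₁ : e₁ = Complex.exp (-(Real.pi : ℂ) / 3 * Complex.I))
    (he₂ : e₂ = Complex.exp ((Real.pi : ℂ) / 3 * Complex.I))
    (he₃ : e₃ = -1)
    (h12 : α₁ ≠ α₂) (h13 : α₁ ≠ α₃) (h23 : α₂ ≠ α₃)
    (ha : a = -(α₁ + α₂ + α₃))
    (hb : b = α₁ * α₂ + α₁ * α₃ + α₂ * α₃)
    (hc : c = -(α₁ * α₂ * α₃))
    (hP : ∀ z₁ z₂ z₃, P z₁ z₂ z₃ =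
      z₁ * z₂ * z₃ + a / 3 * (z₁ * z₂ + z₂ * z₃ + z₃ * z₁) + b / 3 * (z₁ + z₂ + z₃) + c)
    (hF : ∀ z₁ z₂, F z₁ z₂ =
      -((a * z₁ * z₂ + b * (z₁ + z₂) + 3 * c) / (3 * z₁ * z₂ + a * (z₁ + z₂) + b)))
    (hu : u = -((α₁ * α₂ * e₃ + α₁ * α₃ * e₂ + α₂ * α₃ * e₁) /
      (α₁ * e₁ + α₂ * e₂ + α₃ * e₃)))
    (hv : v = -((α₁ * α₂ * e₃ + α₁ * α₃ * e₁ + α₂ * α₃ * e₂) /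
      (α₁ * e₂ + α₂ * e₁ + α₃ * e₃)))
    (hne₁ : α₁ * e₁ + α₂ * e₂ + α₃ * e₃ ≠ 0)
    (hne₂ : α₁ * e₂ + α₂ * e₁ + α₃ * e₃ ≠ 0) :
    (∀ z₁ : ℂ, P z₁ u v = 0) ∧
    (∀ z₁ : ℂ, 3 * z₁ * u + a * (z₁ + u) + b ≠ 0 → F z₁ u = v) ∧
    (∀ z₁ : ℂ, 3 * z₁ * v + a * (z₁ + v) + b ≠ 0 → F z₁ v = u) := by
  subst he₁ he₂ he₃
  simp only [hP, hF]
  exact stmt_5_general exp_neg_pi_div_three_mul_I_add_exp exp_neg_pi_div_three_mul_I_mul_exp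
    ha hb hc hu hv hne₁ hne₂
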